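/- arXiv:2301.07334 — 5 statements merged into one kernel-verified Lean document; each statement's English description precedes it below -/
import Mathlib

section
/- If n, d1, d2, a, b are integers with n ≥ 2, 1 ≤ a ≤ 9, 0 ≤ b ≤ 9, 0 ≤ d2 < d1 and 27·2^{n−2} = a·(10^{d1} − 1) + 9·(b−a)·10^{d2}, then d2 ≤ 3 and d1 ≤ 13. -/
/-- Shifted `k`-generalized Lucas sequence: `genLucas k m` equals `L^{(k)}_{m - (k-2)}`,
so that index `m = 0` corresponds to `n = 2 - k`.  The initial values are
`L^{(k)}_{2-k} = ⋯ = L^{(k)}_{-1} = 0`, `L^{(k)}_0 = 2`, `L^{(k)}_1 = 1`, and each term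
afterwards is the sum of the `k` preceding terms. -/
def genLucas (k : ℕ) : ℕ → ℤ := fun m =>
  if h1 : m < k - 2 then 0
  else if h2 : m = k - 2 then 2
  else if h3 : m = k - 1 then 1
  else ∑ i ∈ Finset.range k, genLucas k (m - 1 - i)
decreasing_by omega

/-- The `k`-generalized Lucas number `L^{(k)}_n` for `n ≥ 0`. -/
def lucasL (k n : ℕ) : ℤ := genLucas k (n + k - 2)

/-!
Put `m = n - 2` and `X = 9 (b - a) 10 ^ d2 - a`, so that the equation reads
`27 * 2 ^ m = a * 10 ^ d1 + X`. The right-hand side is at least `10 ^ (d1 - 1) - 1`, which forces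
`d1 ≤ m` as soon as `4 ≤ d1`, and then `2 ^ d1 ∣ X`. If `4 ≤ d2`, this gives `16 ∣ a`, which no
nonzero digit satisfies. If `d2 ≤ 2`, then `0 < |X| < 10 ^ 4 < 2 ^ 14`, hence `d1 < 14`. In the
remaining case `d2 = 3`, already `2 ^ 8` does not divide `X`: it would force `a = 8` and
`b ≡ 21 (mod 32)`.
-/

section DivisibilityByPowers

variable {R : Type*} [CommRing R] {p B : R}

theorem pow_dvd_mul_pow_sub_of_eq {a c e : R} {k m d₁ d₂ : ℕ} (hpB : p ∣ B) (hkm : k ≤ m)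
    (hkd : k ≤ d₁) (h : c * p ^ m = a * (B ^ d₁ - 1) + e * B ^ d₂) :
    p ^ k ∣ e * B ^ d₂ - a := by
  have hX : e * B ^ d₂ - a = c * p ^ m - a * B ^ d₁ := by rw [h]; ring
  have hB : p ^ k ∣ B ^ d₁ := (pow_dvd_pow p hkd).trans (pow_dvd_pow_of_dvd hpB d₁)
  rw [hX]
  exact ((pow_dvd_pow p hkm).mul_left c).sub (hB.mul_left a)

theorem pow_dvd_of_dvd_mul_pow_sub {a e : R} {k d : ℕ} (hpB : p ∣ B) (hkd : k ≤ d)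
    (h : p ^ k ∣ e * B ^ d - a) : p ^ k ∣ a := by
  have hB : p ^ k ∣ B ^ d := (pow_dvd_pow p hkd).trans (pow_dvd_pow_of_dvd hpB d)
  exact (dvd_sub_right (hB.mul_left e)).mp h

end DivisibilityByPowers

-- The right-hand side is `B - 1` times the number with `d + 1` base-`B` digits, all equal to `a`
-- except for a digit `b` at position `d₂`.
theorem pow_sub_one_le_almost_repdigit {R : Type*} [CommRing R] [PartialOrder R] [IsOrderedRing R]
    {a b B : R} {d d₂ : ℕ} (hB : 1 ≤ B) (ha : 1 ≤ a) (hb : 0 ≤ b) (hd : d₂ ≤ d) :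
    B ^ d - 1 ≤ a * (B ^ (d + 1) - 1) + (B - 1) * (b - a) * B ^ d₂ := by
  have hB₁ : 0 ≤ B - 1 := sub_nonneg.mpr hB
  have hB₀ : 0 ≤ B := zero_le_one.trans hB
  have hone : 0 ≤ B ^ d - 1 := sub_nonneg.mpr (one_le_pow₀ hB)
  have hmono : 0 ≤ B ^ d - B ^ d₂ := sub_nonneg.mpr (pow_le_pow_right₀ hB hd)
  calc
    B ^ d - 1 ≤ a * (B ^ d - 1) := le_mul_of_one_le_left hone ha
    _ ≤ a * (B ^ d - 1) + ((B - 1) * a * (B ^ d - B ^ d₂) + (B - 1) * b * B ^ d₂) :=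
      le_add_of_nonneg_right <| add_nonneg
        (mul_nonneg (mul_nonneg hB₁ (zero_le_one.trans ha)) hmono)
        (mul_nonneg (mul_nonneg hB₁ hb) (pow_nonneg hB₀ d₂))
    _ = a * (B ^ (d + 1) - 1) + (B - 1) * (b - a) * B ^ d₂ := by ring

theorem exponent_lt_of_mul_pow_sub_one_le {p q c : ℤ} {d m : ℕ} (hp : 1 < p) (hc : 0 ≤ c)
    (hcq : c < q ^ d) (hd : d ≠ 0) (h : (p * q) ^ d - 1 ≤ c * p ^ m) : d < m := by
  by_contra! hmd
  have hpd : 1 < p ^ d := one_lt_pow₀ hp hd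
  have : (p * q) ^ d - 1 < (p * q) ^ d - 1 :=
    calc
      (p * q) ^ d - 1 ≤ c * p ^ m := h
      _ ≤ c * p ^ d := by gcongr; exact hp.le
      _ ≤ (q ^ d - 1) * p ^ d := by gcongr; exact Int.le_sub_one_of_lt hcq
      _ = (p * q) ^ d - p ^ d := by ring
      _ < (p * q) ^ d - 1 := by gcongr
  exact this.false

section Digits

variable {a b B : ℤ}

theorem mul_pow_sub_digit_ne_zero (hB : 0 < B) (ha : 0 < a) (hb : b < B) (d : ℕ) :
    (B - 1) * (b - a) * B ^ d - a ≠ 0 := by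
  intro h
  have hpow : 1 ≤ B ^ d := one_le_pow₀ hB
  have hab : a < b := by
    by_contra! hba
    have : (B - 1) * (b - a) * B ^ d ≤ 0 :=
      mul_nonpos_of_nonpos_of_nonneg
        (mul_nonpos_of_nonneg_of_nonpos (by lia) (by lia)) (by lia)
    lia
  have haB : B - 1 ≤ a :=
    calc
      B - 1 ≤ (B - 1) * (b - a) := le_mul_of_one_le_right (by lia) (by lia)
      _ ≤ (B - 1) * (b - a) * B ^ d :=
        le_mul_of_one_le_right (mul_nonneg (by lia) (by lia)) hpow
      _ = a := sub_eq_zero.mp h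
  lia

theorem abs_mul_pow_sub_digit_lt (ha₀ : 0 ≤ a) (ha : a < B) (hb₀ : 0 ≤ b) (hb : b < B) (d : ℕ) :
    |(B - 1) * (b - a) * B ^ d - a| < B ^ (d + 2) := by
  have hB : 1 ≤ B := by lia
  have hB₁ : 0 ≤ B - 1 := by lia
  have hpow : 1 ≤ B ^ d := one_le_pow₀ hB
  have hdiff : |b - a| ≤ B - 1 := abs_le.mpr ⟨by lia, by lia⟩
  calc
    |(B - 1) * (b - a) * B ^ d - a| ≤ |(B - 1) * (b - a) * B ^ d| + |a| := abs_sub _ _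
    _ = (B - 1) * |b - a| * B ^ d + a := by
      rw [abs_mul, abs_mul, abs_of_nonneg hB₁, abs_of_nonneg (zero_le_one.trans hpow),
        abs_of_nonneg ha₀]
    _ ≤ (B - 1) * (B - 1) * B ^ d + a := by gcongr
    _ < (B - 1) * (B - 1) * B ^ d + B * B ^ d :=
      add_lt_add_right (ha.trans_le (le_mul_of_one_le_right (by lia) hpow)) _
    _ ≤ B ^ (d + 2) := by
      have : 0 ≤ (B - 1) * B ^ d := by positivity
      linear_combination this

theorem not_two_pow_eight_dvd_mul_ten_pow_three_sub (ha₁ : 1 ≤ a) (ha₉ : a ≤ 9) (hb₀ : 0 ≤ b)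
    (hb₉ : b ≤ 9) : ¬ 2 ^ 8 ∣ 9 * (b - a) * 10 ^ 3 - a := by
  intro h
  have h8 : 2 ^ 3 ∣ a :=
    pow_dvd_of_dvd_mul_pow_sub (by norm_num) le_rfl ((pow_dvd_pow 2 (by norm_num)).trans h)
  obtain rfl : a = 8 := by lia
  have : 2 ^ 5 ∣ 1125 * (b - 8) - 1 := by lia
  have hb : b % 32 = 21 := by lia
  lia

theorem two_pow_dvd_of_almost_repdigit_eq {m d₁ d₂ : ℕ} (ha : 1 ≤ a) (hb : 0 ≤ b) (hd : d₂ < d₁)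
    (hd₁ : 4 ≤ d₁) (h : 27 * 2 ^ m = a * (10 ^ d₁ - 1) + 9 * (b - a) * 10 ^ d₂) :
    2 ^ d₁ ∣ 9 * (b - a) * 10 ^ d₂ - a := by
  obtain ⟨d, rfl⟩ : ∃ d, d₁ = d + 1 := ⟨d₁ - 1, by lia⟩
  have hsize : (2 * 5 : ℤ) ^ d - 1 ≤ 27 * 2 ^ m :=
    (pow_sub_one_le_almost_repdigit (B := 10) (by norm_num) ha hb (Nat.lt_succ_iff.mp hd)).trans_eq
      h.symm
  have hcoeff : (27 : ℤ) < 5 ^ d :=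
    calc
      (27 : ℤ) < 5 ^ 3 := by norm_num
      _ ≤ 5 ^ d := pow_le_pow_right₀ (by norm_num) (by lia)
  have hdm : d < m :=
    exponent_lt_of_mul_pow_sub_one_le (by norm_num) (by norm_num) hcoeff (by lia) hsize
  exact pow_dvd_mul_pow_sub_of_eq (by norm_num) hdm le_rfl h

end Digits

/-- If `27 * 2^(n-2) = a (10^{d1} - 1) + 9 (b - a) 10^{d2}` with digits `1 ≤ a ≤ 9`,
`0 ≤ b ≤ 9` and `0 ≤ d2 < d1`, then `d2 ≤ 3` and `d1 ≤ 13`. -/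
theorem pow_two_repdigit_bound (n d1 d2 : ℕ) (a b : ℤ) (hn : 2 ≤ n)
    (ha1 : 1 ≤ a) (ha9 : a ≤ 9) (hb0 : 0 ≤ b) (hb9 : b ≤ 9) (hd : d2 < d1)
    (heq : 27 * 2 ^ (n - 2) = a * (10 ^ d1 - 1) + 9 * (b - a) * 10 ^ d2) :
    d2 ≤ 3 ∧ d1 ≤ 13 := by
  have hdvd (hd1 : 4 ≤ d1) : 2 ^ d1 ∣ 9 * (b - a) * 10 ^ d2 - a :=
    two_pow_dvd_of_almost_repdigit_eq ha1 hb0 hd hd1 heq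
  have hd2 : d2 ≤ 3 := by
    by_contra! hd2
    have h16 : 2 ^ 4 ∣ a := pow_dvd_of_dvd_mul_pow_sub (by norm_num) hd2
      ((pow_dvd_pow 2 (by lia)).trans (hdvd (by lia)))
    lia
  refine ⟨hd2, ?_⟩
  by_contra! hd1
  have h14 : 2 ^ 14 ∣ 9 * (b - a) * 10 ^ d2 - a := (pow_dvd_pow 2 hd1).trans (hdvd (by lia))
  obtain hd2 | rfl : d2 ≤ 2 ∨ d2 = 3 := by lia
  · have hlt : |9 * (b - a) * 10 ^ d2 - a| < 2 ^ 14 :=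
      calc
        |9 * (b - a) * 10 ^ d2 - a| < 10 ^ (d2 + 2) :=
          abs_mul_pow_sub_digit_lt (B := 10) (by lia) (by lia) hb0 (by lia) d2
        _ ≤ 10 ^ 4 := pow_le_pow_right₀ (by norm_num) (by lia)
        _ < 2 ^ 14 := by norm_num
    exact mul_pow_sub_digit_ne_zero (B := 10) (by norm_num) (by lia) (by lia) d2
      (Int.eq_zero_of_abs_lt_dvd h14 hlt)
  · exact not_two_pow_eight_dvd_mul_ten_pow_three_sub ha1 ha9 hb0 hb9
      ((pow_dvd_pow 2 (by norm_num)).trans h14)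
end

section
/- For every integer k ≥ 2, the algebraic number f_k(α) = (α−1)/(2 + (k+1)(α−2)) is not an algebraic integer, where α = α(k) is the dominant root of Ψ_k. -/
/-!
At a root `α` of `Ψ_k`, differentiating `(x - 1) Ψ_k = x^k (x - 2) + 1` shows that
`α (2 - α) f_k(α)` is the inverse of `Ψ_k'(α)`. If `f_k(α)` were an algebraic integer, `Ψ_k'(α)`
would thus be a unit of the order `ℤ[α, Ψ_k'(α)⁻¹]`, which would then be a finite unramified
extension of `ℤ`. By the Hermite-Minkowski theorem the only such domain is `ℤ` itself, but `Ψ_k`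
has no integer root.
-/

open Polynomial

section Unramified

variable {R A M : Type*} [CommRing R] [CommRing A] [Algebra R A]

theorem derivation_eq_zero_of_mul_aeval_derivative_eq_one [AddCommGroup M] [Module A M]
    [Module R M] (D : Derivation R A M) {P : R[X]} {x y : A} (hP : aeval x P = 0)
    (hy : y * aeval x (derivative P) = 1) : D x = 0 :=
  calc D x = y • aeval x (derivative P) • D x := by rw [smul_smul, hy, one_smul]
    _ = y • D (aeval x P) := by rw [D.map_aeval]
    _ = 0 := by rw [hP, map_zero, smul_zero]

theorem formallyUnramified_of_adjoin_eq_top {s : Set A} (hs : Algebra.adjoin R s = ⊤)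
    (hD : ∀ a ∈ s, KaehlerDifferential.D R A a = 0) : Algebra.FormallyUnramified R A := by
  have hD_zero : KaehlerDifferential.D R A = 0 := Derivation.ext_of_adjoin_eq_top s hs hD
  have htop : (⊤ : Submodule A (Ω[A⁄R])) = ⊥ := by
    rw [← KaehlerDifferential.span_range_derivation, Submodule.span_eq_bot]
    rintro _ ⟨a, rfl⟩
    rw [hD_zero, Derivation.zero_apply]
  exact ⟨(Submodule.subsingleton_iff A).mp (subsingleton_of_bot_eq_top htop.symm)⟩

theorem formallyUnramified_of_mul_aeval_derivative_eq_one {P : R[X]} {x y : A}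
    (hxy : Algebra.adjoin R {x, y} = ⊤) (hP : aeval x P = 0)
    (hy : y * aeval x (derivative P) = 1) : Algebra.FormallyUnramified R A := by
  have hDx := derivation_eq_zero_of_mul_aeval_derivative_eq_one (KaehlerDifferential.D R A) hP hy
  refine formallyUnramified_of_adjoin_eq_top hxy ?_
  rintro a (rfl | rfl)
  · exact hDx
  · rw [Derivation.leibniz_of_mul_eq_one _ hy, Derivation.map_aeval, hDx, smul_zero, smul_zero]

theorem exists_eq_intCast_of_mul_aeval_derivative_eq_one [IsDomain A] [CharZero A]
    {P : ℤ[X]} {x y : A} (hx : IsIntegral ℤ x) (hy : IsIntegral ℤ y)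
    (hP : aeval x P = 0) (hxy : y * aeval x (derivative P) = 1) : ∃ n : ℤ, x = n := by
  let S := Algebra.adjoin ℤ {x, y}
  let x' : S := ⟨x, Algebra.subset_adjoin (Set.mem_insert x {y})⟩
  let y' : S := ⟨y, Algebra.subset_adjoin (Set.mem_insert_of_mem x rfl)⟩
  have hfinite : Module.Finite ℤ S := by
    refine Module.Finite.iff_fg.mpr (fg_adjoin_of_finite (Set.toFinite {x, y}) ?_)
    rintro a (rfl | rfl) <;> assumption
  have hgen : Algebra.adjoin ℤ {x', y'} = ⊤ := by
    rw [← Algebra.adjoin_adjoin_coe_preimage]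
    congr 1
    ext a
    simp only [Set.mem_insert_iff, Set.mem_singleton_iff, Set.mem_preimage, Subtype.ext_iff, x', y']
  have haeval (Q : ℤ[X]) : (aeval x' Q : A) = aeval x Q := (aeval_algebraMap_apply A x' Q).symm
  have hunramified : Algebra.FormallyUnramified ℤ S :=
    formallyUnramified_of_mul_aeval_derivative_eq_one (P := P) hgen
      (Subtype.ext <| (haeval P).trans hP)
      (Subtype.ext <| (congrArg (y * ·) (haeval (derivative P))).trans hxy)
  have : Algebra.Unramified ℤ S := {}
  obtain ⟨n, hn⟩ := (bijective_algebraMap_int_of_finite_of_unramified (𝒪 := S)).surjective x'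
  exact ⟨n, by simpa [x'] using congrArg (algebraMap S A) hn.symm⟩

end Unramified

/-- The characteristic polynomial `Ψ_k = X^k - X^{k-1} - ⋯ - X - 1` of the `k`-step Fibonacci
recurrence, with integer coefficients; its roots in other rings are taken via `aeval`. -/
noncomputable def kBonacciPoly (k : ℕ) : ℤ[X] := X ^ k - ∑ i ∈ Finset.range k, X ^ i

section kBonacciPoly

theorem monic_kBonacciPoly (k : ℕ) : (kBonacciPoly k).Monic := by
  refine monic_X_pow_sub (mem_degreeLT.mp (Submodule.sum_mem _ fun i hi ↦ mem_degreeLT.mpr ?_))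
  rw [degree_X_pow]
  exact_mod_cast Finset.mem_range.mp hi

theorem kBonacciPoly_mul_X_sub_one (k : ℕ) :
    kBonacciPoly k * (X - 1) = X ^ k * (X - 2) + 1 := by
  rw [kBonacciPoly, sub_mul, geom_sum_mul]
  ring

-- The factor `X` avoids the truncated exponent `k - 1` of the derivative at `k = 0`.
theorem X_mul_derivative_kBonacciPoly_mul_X_sub_one (k : ℕ) :
    X * derivative (kBonacciPoly k * (X - 1)) = X ^ k * ((k : ℤ[X]) * (X - 2) + X) := by
  simp only [kBonacciPoly_mul_X_sub_one, derivative_mul, derivative_add, derivative_sub,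
    derivative_X, derivative_one, derivative_ofNat, derivative_X_pow, map_natCast, sub_zero,
    add_zero, mul_one]
  rcases k with _ | k
  · simp
  · rw [Nat.add_sub_cancel]
    ring

variable {A : Type*} [CommRing A] {k : ℕ} {α : A}

theorem aeval_kBonacciPoly_eq_zero_iff :
    aeval α (kBonacciPoly k) = 0 ↔ α ^ k = ∑ i ∈ Finset.range k, α ^ i := by
  simp only [kBonacciPoly, map_sub, map_sum, map_pow, aeval_X, sub_eq_zero]

theorem pow_mul_two_sub_eq_one_of_aeval_kBonacciPoly (h : aeval α (kBonacciPoly k) = 0) :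
    α ^ k * (2 - α) = 1 := by
  have hmul := congrArg (aeval α) (kBonacciPoly_mul_X_sub_one k)
  simp only [map_mul, map_add, map_sub, map_pow, map_one, map_ofNat, aeval_X, h] at hmul
  linear_combination hmul

theorem aeval_derivative_kBonacciPoly (h : aeval α (kBonacciPoly k) = 0) :
    α * (2 - α) * aeval α (derivative (kBonacciPoly k)) * (α - 1) =
      2 + ((k : A) + 1) * (α - 2) := by
  have hpow := pow_mul_two_sub_eq_one_of_aeval_kBonacciPoly h
  have hder := congrArg (aeval α) (X_mul_derivative_kBonacciPoly_mul_X_sub_one k)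
  simp only [derivative_mul, derivative_X, derivative_one, map_mul, map_add, map_sub, map_pow,
    map_zero, map_one, map_ofNat, map_natCast, aeval_X, h] at hder
  linear_combination (2 - α) * hder + (k * (α - 2) + α) * hpow

theorem eval_kBonacciPoly_ne_zero (hk : k ≠ 1) (n : ℤ) : (kBonacciPoly k).eval n ≠ 0 := by
  intro h
  rw [← coe_aeval_eq_eval] at h
  have hpow := pow_mul_two_sub_eq_one_of_aeval_kBonacciPoly h
  rcases Int.isUnit_iff.mp (IsUnit.of_mul_eq_one_right _ hpow) with hn | hn
  · obtain rfl : n = 1 := by lia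
    have hsum := aeval_kBonacciPoly_eq_zero_iff.mp h
    simp only [one_pow, Finset.sum_const, Finset.card_range, nsmul_eq_mul, mul_one] at hsum
    lia
  · obtain rfl : n = 3 := by lia
    have : (0 : ℤ) < 3 ^ k := by positivity
    lia

theorem ne_intCast_of_aeval_kBonacciPoly [CharZero A] (hk : k ≠ 1)
    (h : aeval α (kBonacciPoly k) = 0) (n : ℤ) : α ≠ n := by
  rintro rfl
  rw [← eq_intCast (algebraMap ℤ A), aeval_algebraMap_apply, eq_intCast, Int.cast_eq_zero,
    coe_aeval_eq_eval] at h
  exact eval_kBonacciPoly_ne_zero hk n h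

theorem isIntegral_of_aeval_kBonacciPoly (h : aeval α (kBonacciPoly k) = 0) : IsIntegral ℤ α :=
  ⟨kBonacciPoly k, monic_kBonacciPoly k, h⟩

end kBonacciPoly

section Field

variable {L : Type*} [Field L] [CharZero L] {k : ℕ} {α : L}

theorem two_add_mul_sub_two_ne_zero_of_aeval_kBonacciPoly (hk : k ≠ 1)
    (h : aeval α (kBonacciPoly k) = 0) : 2 + ((k : L) + 1) * (α - 2) ≠ 0 := by
  intro hzero
  have hrat : ∃ q : ℚ, α = q := by
    refine ⟨2 - 2 / (k + 1), ?_⟩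
    have : (k : L) + 1 ≠ 0 := k.cast_add_one_ne_zero
    push_cast
    field_simp
    linear_combination hzero
  obtain ⟨n, hn⟩ := (isIntegral_of_aeval_kBonacciPoly h).exists_int_iff_exists_rat.mp hrat
  exact ne_intCast_of_aeval_kBonacciPoly hk h n hn

theorem fk_alpha_not_algebraic_integer_general (hk : 2 ≤ k)
    (hroot : α ^ k = ∑ i ∈ Finset.range k, α ^ i) :
    ¬ IsIntegral ℤ ((α - 1) / (2 + ((k : L) + 1) * (α - 2))) := by
  intro hf
  have hk_ne : k ≠ 1 := by lia
  have hα := aeval_kBonacciPoly_eq_zero_iff.mpr hroot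
  have hint := isIntegral_of_aeval_kBonacciPoly hα
  have hdenom := two_add_mul_sub_two_ne_zero_of_aeval_kBonacciPoly hk_ne hα
  have htwo : IsIntegral ℤ (2 : L) := mod_cast isIntegral_natCast 2
  have hinv : α * (2 - α) * ((α - 1) / (2 + ((k : L) + 1) * (α - 2))) *
      aeval α (derivative (kBonacciPoly k)) = 1 := by
    rw [← mul_div_assoc, div_mul_eq_mul_div, div_eq_one_iff_eq hdenom,
      ← aeval_derivative_kBonacciPoly hα]
    ring
  obtain ⟨n, hn⟩ := exists_eq_intCast_of_mul_aeval_derivative_eq_one hint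
    ((hint.mul (htwo.sub hint)).mul hf) hα hinv
  exact ne_intCast_of_aeval_kBonacciPoly hk_ne hα n hn

end Field

/-- For `k ≥ 2`, the number `f_k(α) = (α-1)/(2 + (k+1)(α-2))` is not an algebraic
integer, where `α` is the dominant root of `Ψ_k(x) = x^k - x^{k-1} - ⋯ - x - 1`. -/
theorem fk_alpha_not_algebraic_integer (k : ℕ) (hk : 2 ≤ k) (α : ℝ) (hα : 1 < α)
    (hroot : α ^ k = ∑ i ∈ Finset.range k, α ^ i) :
    ¬ IsIntegral ℤ ((α - 1) / (2 + ((k : ℝ) + 1) * (α - 2))) :=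
  fk_alpha_not_algebraic_integer_general hk hroot
end

section
/- Let k ≥ 2, let α be the dominant root of Ψ_k and f_k(x) = (x−1)/(2 + (k+1)(x−2)). For all integers n ≥ 2, d1 ≥ 3 and 1 ≤ a ≤ 9, one has f_k(α)·(2α − 1)·α^{n−1} ≠ a·10^{d1}/9. -/
open scoped IntermediateField

/-! If `f_k(α)(2α - 1)α^m` were a rational number `q`, then an embedding of `ℚ(α)` into `ℂ`
moving `α` to another root `β` of `Ψ_k` would give `f_k(β)(2β - 1)β^m = q` as well. But then
`|q| < 1` because `‖β‖ ≤ 1` and `‖f_k(β)‖ < 1 / (k + 1) ≤ 1 / 3`, whereas `q > 1` because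
`f_k(α)(2α - 1) > 1`. -/

lemma exists_algHom_gen_ne {F E Ω : Type*} [Field F] [Field E] [Field Ω] [IsAlgClosed Ω]
    [Algebra F E] [Algebra F Ω] [Algebra E Ω] [IsScalarTower F E Ω] {x : E}
    (hsep : IsSeparable F x) (hx : x ∉ (⊥ : Subalgebra F E)) :
    ∃ φ : F⟮x⟯ →ₐ[F] Ω, φ (IntermediateField.AdjoinSimple.gen F x) ≠ algebraMap E Ω x := by
  have hminpoly : minpoly F (algebraMap E Ω x) = minpoly F x :=
    minpoly.algebraMap_eq (algebraMap E Ω).injective x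
  have hx' : algebraMap E Ω x ∉ (⊥ : Subalgebra F Ω) := by
    rintro ⟨r, hr⟩
    refine hx ⟨r, (algebraMap E Ω).injective ?_⟩
    exact (IsScalarTower.algebraMap_apply F E Ω r).symm.trans hr
  have hsep' : IsSeparable F (algebraMap E Ω x) := by rwa [IsSeparable, hminpoly]
  obtain ⟨y, hne, hconj⟩ :=
    (notMem_iff_exists_ne_and_isConjRoot hsep' (IsAlgClosed.splits _)).1 hx'
  have hy : y ∈ (minpoly F x).aroots Ω :=
    hminpoly ▸ (isConjRoot_iff_mem_minpoly_aroots hsep'.isIntegral).1 hconj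
  refine ⟨(IntermediateField.algHomAdjoinIntegralEquiv F hsep.isIntegral).symm ⟨y, hy⟩, ?_⟩
  rw [IntermediateField.algHomAdjoinIntegralEquiv_symm_apply_gen]
  exact hne.symm

lemma norm_lt_norm_add_ofReal {z : ℂ} {b : ℝ} (hz : 0 ≤ z.re) (hb : 0 < b) :
    ‖z‖ < ‖z + b‖ := by
  rw [← sq_lt_sq₀ (norm_nonneg _) (norm_nonneg _), Complex.sq_norm, Complex.sq_norm]
  simp only [Complex.normSq_apply, Complex.add_re, Complex.add_im, Complex.ofReal_re,
    Complex.ofReal_im]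
  nlinarith [mul_nonneg hz hb.le]

lemma geom_sum_mul_pow_lt {R : Type*} [CommSemiring R] [LinearOrder R] [IsStrictOrderedRing R]
    {x y : R} {k : ℕ} (hk : k ≠ 0) (hx : 0 < x) (hxy : x < y) :
    (∑ i ∈ Finset.range k, y ^ i) * x ^ k < (∑ i ∈ Finset.range k, x ^ i) * y ^ k := by
  have hy : 0 < y := hx.trans hxy
  rw [Finset.sum_mul, Finset.sum_mul]
  refine Finset.sum_lt_sum_of_nonempty (Finset.nonempty_range_iff.2 hk) fun i hi ↦ ?_
  obtain ⟨j, hj, rfl⟩ : ∃ j, j ≠ 0 ∧ k = i + j :=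
    ⟨k - i, by have := Finset.mem_range.1 hi; omega, by have := Finset.mem_range.1 hi; omega⟩
  calc y ^ i * x ^ (i + j) = (x ^ i * y ^ i) * x ^ j := by ring
    _ < (x ^ i * y ^ i) * y ^ j := by gcongr
    _ = x ^ i * y ^ (i + j) := by ring

/-- `x` is a root of `Ψ_k(X) = X ^ k - X ^ (k - 1) - ⋯ - X - 1`, the characteristic polynomial of
the `k`-generalized Fibonacci and Lucas recurrences. -/
def IsBonacciRoot {R : Type*} [Semiring R] (k : ℕ) (x : R) : Prop :=
  x ^ k = ∑ i ∈ Finset.range k, x ^ i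

namespace IsBonacciRoot

lemma map_iff {R S : Type*} [Semiring R] [Semiring S] {f : R →+* S}
    (hf : Function.Injective f) {k : ℕ} {x : R} : IsBonacciRoot k (f x) ↔ IsBonacciRoot k x := by
  rw [IsBonacciRoot, IsBonacciRoot, ← hf.eq_iff, map_pow, map_sum]
  simp only [map_pow]

lemma ne_zero {R : Type*} [Semiring R] [Nontrivial R] {k : ℕ} {x : R} (h : IsBonacciRoot k x) :
    k ≠ 0 := by
  rintro rfl
  simp [IsBonacciRoot] at h

section CommRing

variable {R : Type*} [CommRing R] {k : ℕ} {x : R}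

lemma pow_mul_two_sub (h : IsBonacciRoot k x) : x ^ k * (2 - x) = 1 := by
  have hgeom := geom_sum_mul x k
  rw [← h] at hgeom
  linear_combination -hgeom

open Polynomial in
lemma isIntegral (h : IsBonacciRoot k x) : IsIntegral ℤ x := by
  refine ⟨X ^ k - ∑ i ∈ Finset.range k, X ^ i, monic_X_pow_sub ?_, ?_⟩
  · refine (degree_sum_le _ _).trans_lt ((Finset.sup_lt_iff (WithBot.bot_lt_coe k)).2 ?_)
    exact fun i hi ↦ (degree_X_pow_le i).trans_lt (Nat.cast_lt.2 (Finset.mem_range.1 hi))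
  · simp only [eval₂_sub, eval₂_X_pow, eval₂_finsetSum]
    exact sub_eq_zero.2 h

end CommRing

section Ordered

variable {R : Type*} [CommRing R] [LinearOrder R] [IsStrictOrderedRing R] {k : ℕ} {x y : R}

lemma lt_two (h : IsBonacciRoot k x) (hx : 0 < x) : x < 2 :=
  sub_pos.1 <| pos_of_mul_pos_right (h.pow_mul_two_sub ▸ one_pos) (pow_pos hx k).le

lemma natCast_le_pow (h : IsBonacciRoot k x) (hx : 1 ≤ x) : (k : R) ≤ x ^ k := by
  have hsum := Finset.card_nsmul_le_sum (Finset.range k) (x ^ ·) 1 fun i _ ↦ one_le_pow₀ hx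
  rwa [Finset.card_range, nsmul_one, ← h] at hsum

lemma eq_of_pos (hx : 0 < x) (hy : 0 < y) (h : IsBonacciRoot k x)
    (h' : IsBonacciRoot k y) : x = y := by
  have not_lt {u v : R} (hu : 0 < u) (hroot : IsBonacciRoot k u) (hroot' : IsBonacciRoot k v) :
      ¬ u < v := fun huv ↦ by
    have hlt := geom_sum_mul_pow_lt h.ne_zero hu huv
    rw [← hroot, ← hroot', mul_comm] at hlt
    exact hlt.false
  exact le_antisymm (le_of_not_gt (not_lt hy h' h)) (le_of_not_gt (not_lt hx h h'))

end Ordered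

variable {k : ℕ}

lemma irrational {α : ℝ} (h : IsBonacciRoot k α) (hα : 1 < α) : Irrational α := by
  rintro ⟨q, hq⟩
  obtain ⟨m, rfl⟩ := h.isIntegral.exists_int_iff_exists_rat.1 ⟨q, hq.symm⟩
  have hlower : 1 < m := by exact_mod_cast hα
  have hupper : m < 2 := by exact_mod_cast h.lt_two (zero_lt_one.trans hα)
  omega

/-- The triangle inequality in `β ^ k = ∑ β ^ i` gives `‖2 - β‖ ≤ 2 - ‖β‖` as soon as `1 < ‖β‖`,
and this forces `β` to be real and nonnegative. -/
lemma eq_norm_of_one_lt_norm {β : ℂ} (h : IsBonacciRoot k β) (hβ : 1 < ‖β‖) : β = ‖β‖ := by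
  have htriangle : ‖β‖ ^ k ≤ ∑ i ∈ Finset.range k, ‖β‖ ^ i := by
    simpa only [← norm_pow, ← show β ^ k = _ from h] using
      norm_sum_le (Finset.range k) (β ^ ·)
  have hone : ‖β‖ ^ k * ‖2 - β‖ = 1 := by
    rw [← norm_pow, ← norm_mul, h.pow_mul_two_sub, norm_one]
  have hle : ‖β‖ ^ k * ‖2 - β‖ ≤ ‖β‖ ^ k * (2 - ‖β‖) := by
    nlinarith [geom_sum_mul ‖β‖ k]
  have hnorm : ‖2 - β‖ ≤ 2 - ‖β‖ := le_of_mul_le_mul_left hle (by positivity)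
  have hre : 2 - β.re ≤ ‖2 - β‖ := by simpa using Complex.re_le_norm (2 - β)
  exact Complex.eq_coe_norm_of_nonneg <| Complex.re_eq_norm.1 <|
    le_antisymm (Complex.re_le_norm β) (by linarith)

lemma norm_le_one {α : ℝ} {β : ℂ} (hα : 0 < α) (h : IsBonacciRoot k α)
    (hβ : IsBonacciRoot k β) (hne : β ≠ α) : ‖β‖ ≤ 1 := by
  by_contra! hlt
  have hreal := hβ.eq_norm_of_one_lt_norm hlt
  have hnorm : IsBonacciRoot k ‖β‖ := by
    rw [hreal] at hβ
    exact (map_iff Complex.ofRealHom.injective).1 hβ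
  exact hne (hreal.trans (congrArg _ (eq_of_pos (by linarith) hα hnorm h)))

end IsBonacciRoot

/-- The coefficient `f_k(x)` of Dresden and Du: the `k`-generalized Fibonacci numbers are
`∑ f_k(x) * x ^ (n - 1)`, summed over the roots `x` of `Ψ_k`. -/
def binetCoeff {K : Type*} [Field K] (k : ℕ) (x : K) : K :=
  (x - 1) / (2 + ((k : K) + 1) * (x - 2))

/-- The contribution of the root `x` of `Ψ_k` to the Binet formula for the `k`-generalized Lucas
number `L^{(k)}_{m + 1}`; the index is shifted so that the exponent is not a truncated
difference. -/
def lucasBinetTerm {K : Type*} [Field K] (k m : ℕ) (x : K) : K :=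
  binetCoeff k x * (2 * x - 1) * x ^ m

lemma map_lucasBinetTerm {K L : Type*} [Field K] [Field L] (f : K →+* L) (k m : ℕ) (x : K) :
    f (lucasBinetTerm k m x) = lucasBinetTerm k m (f x) := by
  simp only [lucasBinetTerm, binetCoeff, map_mul, map_div₀, map_sub, map_add, map_pow,
    map_natCast, map_ofNat, map_one]

/-- With `w = 1 - z` the denominator of `f_k(z)` is `-((k + 1) * w + (k - 1))`, and `0 ≤ w.re`. -/
lemma norm_binetCoeff_lt {k : ℕ} (hk : 1 < k) {z : ℂ} (hz : z.re ≤ 1) :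
    ‖binetCoeff k z‖ < 1 / ((k : ℝ) + 1) := by
  have hdenom : ((k : ℝ) + 1) * ‖z - 1‖ < ‖2 + ((k : ℂ) + 1) * (z - 2)‖ := by
    have hk' : (0 : ℝ) < k - 1 := sub_pos.2 (by exact_mod_cast hk)
    have hre : 0 ≤ (((k + 1 : ℝ) : ℂ) * (1 - z)).re := by
      rw [Complex.re_ofReal_mul]
      exact mul_nonneg (by positivity) (by simpa using hz)
    calc ((k : ℝ) + 1) * ‖z - 1‖ = ‖((k + 1 : ℝ) : ℂ) * (1 - z)‖ := by
          rw [norm_mul, Complex.norm_of_nonneg (by positivity), norm_sub_rev]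
      _ < ‖((k + 1 : ℝ) : ℂ) * (1 - z) + (k - 1 : ℝ)‖ := norm_lt_norm_add_ofReal hre hk'
      _ = ‖2 + ((k : ℂ) + 1) * (z - 2)‖ := by
          rw [← norm_neg]
          congr 1
          push_cast
          ring
  have hpos : 0 < ‖2 + ((k : ℂ) + 1) * (z - 2)‖ := hdenom.trans_le' (by positivity)
  rw [binetCoeff, norm_div, div_lt_div_iff₀ hpos (by positivity)]
  linarith

lemma norm_lucasBinetTerm_lt_one {k : ℕ} (hk : 1 < k) (m : ℕ) {z : ℂ} (hz : ‖z‖ ≤ 1) :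
    ‖lucasBinetTerm k m z‖ < 1 := by
  have hk' : (3 : ℝ) ≤ k + 1 := by exact_mod_cast Nat.succ_le_succ hk
  have hcoeff : ‖binetCoeff k z‖ < 1 / 3 :=
    (norm_binetCoeff_lt hk ((Complex.re_le_norm z).trans hz)).trans_le
      (one_div_le_one_div_of_le three_pos hk')
  have hlinear : ‖2 * z - 1‖ ≤ 3 := by
    calc ‖2 * z - 1‖ ≤ ‖2 * z‖ + ‖(1 : ℂ)‖ := norm_sub_le _ _
      _ = 2 * ‖z‖ + 1 := by rw [norm_mul, Complex.norm_ofNat, norm_one]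
      _ ≤ 3 := by linarith
  calc ‖lucasBinetTerm k m z‖ = ‖binetCoeff k z‖ * ‖2 * z - 1‖ * ‖z‖ ^ m := by
        rw [lucasBinetTerm, norm_mul, norm_mul, norm_pow]
    _ ≤ ‖binetCoeff k z‖ * 3 * 1 := by gcongr; exact pow_le_one₀ (norm_nonneg z) hz
    _ < 1 := by linarith

namespace IsBonacciRoot

variable {k : ℕ} {α : ℝ}

lemma binetCoeff_denom_pos (h : IsBonacciRoot k α) (hα : 1 < α) :
    0 < 2 + ((k : ℝ) + 1) * (α - 2) := by
  have htwo_sub : (k : ℝ) * (2 - α) ≤ 1 :=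
    calc (k : ℝ) * (2 - α) ≤ α ^ k * (2 - α) :=
          mul_le_mul_of_nonneg_right (h.natCast_le_pow hα.le)
            (sub_pos.2 (h.lt_two (by linarith))).le
      _ = 1 := h.pow_mul_two_sub
  linarith

lemma one_lt_lucasBinetTerm (hk : 1 < k) (h : IsBonacciRoot k α) (hα : 1 < α) (m : ℕ) :
    1 < lucasBinetTerm k m α := by
  have hk' : (2 : ℝ) ≤ k := by exact_mod_cast hk
  have hlt : α < 2 := h.lt_two (by linarith)
  have hdenom_lt : 2 + ((k : ℝ) + 1) * (α - 2) < (α - 1) * (2 * α - 1) :=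
    calc 2 + ((k : ℝ) + 1) * (α - 2) ≤ 2 + 3 * (α - 2) := by nlinarith
      _ < (α - 1) * (2 * α - 1) := by nlinarith [sq_nonneg (2 * α - 3)]
  have hbase : 1 < binetCoeff k α * (2 * α - 1) := by
    rwa [binetCoeff, div_mul_eq_mul_div, one_lt_div (h.binetCoeff_denom_pos hα)]
  exact one_lt_mul_of_lt_of_le hbase (one_le_pow₀ hα.le)

lemma exists_algHom_norm_gen_le_one (h : IsBonacciRoot k α) (hα : 1 < α) :
    ∃ φ : ℚ⟮α⟯ →ₐ[ℚ] ℂ, ‖φ (IntermediateField.AdjoinSimple.gen ℚ α)‖ ≤ 1 := by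
  have hsep : IsSeparable ℚ α := (minpoly.irreducible h.isIntegral.tower_top).separable
  obtain ⟨φ, hφ⟩ := exists_algHom_gen_ne (Ω := ℂ) hsep (h.irrational hα)
  have hgen : IsBonacciRoot k (IntermediateField.AdjoinSimple.gen ℚ α) :=
    (map_iff (algebraMap ℚ⟮α⟯ ℝ).injective).1 h
  have hφroot : IsBonacciRoot k (φ (IntermediateField.AdjoinSimple.gen ℚ α)) :=
    (map_iff φ.toRingHom.injective).2 hgen
  exact ⟨φ, h.norm_le_one (by linarith) hφroot hφ⟩

end IsBonacciRoot

theorem lambda1_ne_zero_general (k : ℕ) (hk : 2 ≤ k) (α : ℝ) (hα : 1 < α)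
    (hroot : α ^ k = ∑ i ∈ Finset.range k, α ^ i) (m : ℕ) :
    Irrational ((α - 1) / (2 + ((k : ℝ) + 1) * (α - 2)) * (2 * α - 1) * α ^ m) := by
  have h : IsBonacciRoot k α := hroot
  rintro ⟨q, hq : (q : ℝ) = lucasBinetTerm k m α⟩
  obtain ⟨φ, hφ⟩ := h.exists_algHom_norm_gen_le_one hα
  set γ := IntermediateField.AdjoinSimple.gen ℚ α
  have hγ : lucasBinetTerm k m γ = q := (algebraMap ℚ⟮α⟯ ℝ).injective <| by
    rw [map_lucasBinetTerm, map_ratCast, hq, IntermediateField.AdjoinSimple.algebraMap_gen]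
  have hconj : lucasBinetTerm k m (φ γ) = q := by
    rw [← map_ratCast φ q, ← hγ]
    exact (map_lucasBinetTerm φ.toRingHom k m γ).symm
  have hq_lt : |(q : ℝ)| < 1 := by
    simpa only [hconj, Complex.norm_ratCast] using norm_lucasBinetTerm_lt_one hk m hφ
  have hlt_q : 1 < (q : ℝ) := hq ▸ h.one_lt_lucasBinetTerm hk hα m
  exact (hlt_q.trans_le (le_abs_self _)).not_gt hq_lt

/-- Nonvanishing of `Λ₁`: for `k ≥ 2`, `n ≥ 2`, `d1 ≥ 3` and `1 ≤ a ≤ 9`, one has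
`f_k(α)(2α-1)α^{n-1} ≠ a 10^{d1}/9`, where `α` is the dominant root of `Ψ_k`. -/
theorem lambda1_ne_zero (k : ℕ) (hk : 2 ≤ k) (α : ℝ) (hα : 1 < α)
    (hroot : α ^ k = ∑ i ∈ Finset.range k, α ^ i)
    (n d1 : ℕ) (a : ℤ) (hn : 2 ≤ n) (hd1 : 3 ≤ d1) (ha1 : 1 ≤ a) (ha9 : a ≤ 9) :
    (α - 1) / (2 + ((k : ℝ) + 1) * (α - 2)) * (2 * α - 1) * α ^ (n - 1)
      ≠ (a : ℝ) * 10 ^ d1 / 9 := by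
  simpa using (lambda1_ne_zero_general k hk α hα hroot (n - 1)).ne_rat (a * 10 ^ d1 / 9)
end

section
/- Let k ≥ 2, n ≥ k+1, n > 5, and suppose L_n^{(k)} = a·(10^{d1}−1)/9 + (b−a)·10^{d2} with integers 0 ≤ d2 < d1, d1 ≥ 3, 1 ≤ a ≤ 9 and 0 ≤ b ≤ 9. Then |α^{n−1}·10^{−d1}·f_k(α)·(2α−1)·(9/a) − 1| ≤ 87/10^{d1−d2}, where α is the dominant root of Ψ_k and f_k(x) = (x−1)/(2 + (k+1)(x−2)). -/
/-!
Let `α` be the root of `Ψ_k` above `1`. For a sequence `u` satisfying the `k`-term recurrence,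
the defect `u (n + k) - ∑ i < k, α⁻¹ ^ (i + 1) * u (n + i)` gets multiplied by `α` at each
step, so it vanishes identically for `e m = u m - c * α ^ m` as soon as `c` makes it vanish at
`n = 0`. The weights `α⁻¹ ^ (i + 1)` are positive with sum `1`, so every later `e m` is a convex
combination of the `k` preceding ones, and a bound on the first `k` errors holds forever. For
the Lucas numbers this `c` is `(2 α - 1) f_k(α)` up to a power of `α`, and the first errors are
at most `3 / 2`. After clearing denominators, the distance of `Λ₁` from `0` comes from this
error, the `a` in `a * (10 ^ d1 - 1)`, and the second block of digits, and
`9 * (3 / 2) + a + 9 * 8 a * 10 ^ d2 ≤ 87 a * 10 ^ d2`.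
-/

open Finset

theorem norm_le_of_isSolution {R : Type*} [SeminormedCommRing R] {E : LinearRecurrence R}
    {u : ℕ → R} {M : ℝ} (hE : ∑ i, ‖E.coeffs i‖ ≤ 1) (hu : E.IsSolution u) (hM : 0 ≤ M)
    (hinit : ∀ m < E.order, ‖u m‖ ≤ M) (m : ℕ) : ‖u m‖ ≤ M := by
  induction m using Nat.strong_induction_on with
  | _ m ih =>
    obtain hm | hm := lt_or_ge m E.order
    · exact hinit m hm
    obtain ⟨j, rfl⟩ := Nat.exists_eq_add_of_le' hm
    calc ‖u (j + E.order)‖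
        = ‖∑ i, E.coeffs i * u (j + i)‖ := by rw [hu j]
      _ ≤ ∑ i, ‖E.coeffs i‖ * M := norm_sum_le_of_le _ fun i _ =>
          (norm_mul_le _ _).trans (by gcongr; exact ih _ (by omega))
      _ = (∑ i, ‖E.coeffs i‖) * M := (sum_mul ..).symm
      _ ≤ M := mul_le_of_le_one_left hM hE

section Kbonacci

/-- The recurrence `u (n + k) = u n + ⋯ + u (n + k - 1)`, with characteristic polynomial
`Ψ_k`. -/
def kbonacci (R : Type*) [CommSemiring R] (k : ℕ) : LinearRecurrence R where
  order := k
  coeffs _ := 1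

variable {R : Type*} [CommSemiring R] {k : ℕ} {u : ℕ → R}

theorem isSolution_kbonacci_iff :
    (kbonacci R k).IsSolution u ↔ ∀ n, u (n + k) = ∑ i ∈ range k, u (n + i) := by
  simp only [LinearRecurrence.IsSolution, kbonacci, one_mul, sum_range]
  rfl

theorem kbonacci_three_term (hu : (kbonacci R k).IsSolution u) (n : ℕ) :
    u (n + 1 + k) + u n = 2 * u (n + k) := by
  rw [isSolution_kbonacci_iff] at hu
  calc u (n + 1 + k) + u n = ∑ i ∈ range (k + 1), u (n + i) := by
        rw [hu, sum_range_succ' (fun i => u (n + i)), add_zero]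
        simp only [add_assoc, add_comm 1]
    _ = 2 * u (n + k) := by rw [sum_range_succ, ← hu, two_mul]

end Kbonacci

theorem two_sub_mul_pow_eq_one {R : Type*} [CommRing R] {k : ℕ} {α : R}
    (hroot : α ^ k = ∑ i ∈ range k, α ^ i) : (2 - α) * α ^ k = 1 := by
  have h := geom_sum_mul α k
  rw [← hroot] at h
  linear_combination -h

section Deflation

variable {F : Type*} [Field F] {k : ℕ} {α : F}

/-- The recurrence with characteristic polynomial `(x - 1) Ψ_k(x) / (x - α)`, for a root `α`
of `Ψ_k`: dividing `(x - 1) Ψ_k(x) = x ^ (k + 1) - 2 x ^ k + 1` by `x - α` leaves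
`x ^ k - ∑ i < k, α⁻¹ ^ (i + 1) x ^ i`. -/
def deflatedKbonacci (k : ℕ) (α : F) : LinearRecurrence F where
  order := k
  coeffs i := α⁻¹ ^ ((i : ℕ) + 1)

theorem isSolution_deflatedKbonacci_iff {u : ℕ → F} :
    (deflatedKbonacci k α).IsSolution u ↔
      ∀ n, u (n + k) = ∑ i ∈ range k, α⁻¹ ^ (i + 1) * u (n + i) := by
  simp only [LinearRecurrence.IsSolution, deflatedKbonacci,
    sum_range fun i => α⁻¹ ^ (i + 1) * u (_ + i)]
  rfl

theorem isSolution_kbonacci_pow (hroot : α ^ k = ∑ i ∈ range k, α ^ i) :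
    (kbonacci F k).IsSolution fun m => α ^ m :=
  isSolution_kbonacci_iff.2 fun n => by simp only [pow_add, hroot, mul_sum]

theorem inv_pow_eq_two_sub (hroot : α ^ k = ∑ i ∈ range k, α ^ i) : α⁻¹ ^ k = 2 - α := by
  rw [inv_pow]
  exact (eq_inv_of_mul_eq_one_left (two_sub_mul_pow_eq_one hroot)).symm

theorem sum_inv_pow_succ_eq_one (hα : α ≠ 0) (hroot : α ^ k = ∑ i ∈ range k, α ^ i) :
    ∑ i ∈ range k, α⁻¹ ^ (i + 1) = 1 := by
  refine mul_right_cancel₀ (pow_ne_zero k hα) ?_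
  calc (∑ i ∈ range k, α⁻¹ ^ (i + 1)) * α ^ k = ∑ i ∈ range k, α ^ (k - 1 - i) := by
        rw [sum_mul]
        refine sum_congr rfl fun i hi => ?_
        rw [Nat.sub_sub, add_comm 1, pow_sub₀ α hα (mem_range.1 hi), inv_pow, mul_comm]
    _ = ∑ i ∈ range k, α ^ i := sum_range_reflect (fun i => α ^ i) k
    _ = 1 * α ^ k := by rw [one_mul, hroot]

theorem isSolution_deflatedKbonacci_of_kbonacci {u : ℕ → F} (hα : α ≠ 0)
    (hroot : α ^ k = ∑ i ∈ range k, α ^ i) (hu : (kbonacci F k).IsSolution u)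
    (hzero : u k = ∑ i ∈ range k, α⁻¹ ^ (i + 1) * u i) :
    (deflatedKbonacci k α).IsSolution u := by
  refine isSolution_deflatedKbonacci_iff.2 fun n => ?_
  induction n with
  | zero => simpa only [zero_add] using hzero
  | succ n ih =>
    have hscale : ∑ i ∈ range k, α⁻¹ ^ i * u (n + i) = α * u (n + k) := by
      rw [ih, mul_sum]
      exact sum_congr rfl fun i _ => by rw [pow_succ]; field_simp
    have hshift : u n + ∑ i ∈ range k, α⁻¹ ^ (i + 1) * u (n + 1 + i)
        = α * u (n + k) + (2 - α) * u (n + k) := by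
      rw [← hscale, ← inv_pow_eq_two_sub hroot, ← sum_range_succ fun i => α⁻¹ ^ i * u (n + i),
        sum_range_succ', pow_zero, one_mul, add_zero, add_comm]
      simp only [add_assoc, add_comm 1]
    linear_combination kbonacci_three_term hu n - hshift

theorem isSolution_deflatedKbonacci_sub_mul_pow {u : ℕ → F} {c : F} (hα : α ≠ 0)
    (hroot : α ^ k = ∑ i ∈ range k, α ^ i) (hu : (kbonacci F k).IsSolution u)
    (hc : c * (α ^ k - k * α⁻¹) = u k - ∑ i ∈ range k, α⁻¹ ^ (i + 1) * u i) :
    (deflatedKbonacci k α).IsSolution fun m => u m - c * α ^ m := by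
  refine isSolution_deflatedKbonacci_of_kbonacci hα hroot ?_ ?_
  · exact (kbonacci F k).solSpace.sub_mem hu
      ((kbonacci F k).solSpace.smul_mem c (isSolution_kbonacci_pow hroot))
  · have hgeom : ∑ i ∈ range k, α⁻¹ ^ (i + 1) * (c * α ^ i) = k * (c * α⁻¹) := by
      rw [sum_congr rfl (g := fun _ => c * α⁻¹), sum_const, card_range, nsmul_eq_mul]
      intro i _
      rw [pow_succ, inv_pow]
      field_simp
    simp only [mul_sub, sum_sub_distrib, hgeom]
    linear_combination -hc

end Deflation

theorem three_mul_sub_one_le_two_mul_pow {x : ℝ} (hx : 8 / 5 ≤ x) {k : ℕ} (hk : 2 ≤ k) :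
    3 * (k : ℝ) - 1 ≤ 2 * x ^ k := by
  induction k, hk using Nat.le_induction with
  | base => norm_num; nlinarith
  | succ m hm ih =>
    have hm' : (2 : ℝ) ≤ m := by exact_mod_cast hm
    calc 3 * ((m + 1 : ℕ) : ℝ) - 1 ≤ (3 * (m : ℝ) - 1) * (8 / 5) := by push_cast; linarith
      _ ≤ 2 * x ^ m * x := by gcongr
      _ = 2 * x ^ (m + 1) := by ring

/-- The root `α > 1` of `Ψ_k`, written out as `α ^ k = α ^ (k - 1) + ⋯ + α + 1`; `Ψ_k` has at
most one root in this range, and it dominates the others in modulus. -/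
structure IsDominantRoot (k : ℕ) (α : ℝ) : Prop where
  one_lt : 1 < α
  pow_eq : α ^ k = ∑ i ∈ range k, α ^ i

/-- The rational function `f_k` of the Binet-type formula for `k`-generalized Fibonacci and
Lucas numbers. -/
noncomputable def binetWeight (k : ℕ) (x : ℝ) : ℝ :=
  (x - 1) / (2 + ((k : ℝ) + 1) * (x - 2))

namespace IsDominantRoot

variable {k : ℕ} {α : ℝ}

theorem pos (h : IsDominantRoot k α) : 0 < α :=
  zero_lt_one.trans h.one_lt

theorem two_le (h : IsDominantRoot k α) : 2 ≤ k := by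
  have hpow := h.pow_eq
  by_contra! hk
  interval_cases k
  · norm_num at hpow
  · exact h.one_lt.ne' (by simpa using hpow)

theorem lt_two (h : IsDominantRoot k α) : α < 2 := by
  have hprod : 0 < (2 - α) * α ^ k := by rw [two_sub_mul_pow_eq_one h.pow_eq]; exact one_pos
  exact sub_pos.1 (pos_of_mul_pos_left hprod (pow_pos h.pos k).le)

theorem add_one_le_sq (h : IsDominantRoot k α) : α + 1 ≤ α ^ 2 := by
  obtain ⟨l, rfl⟩ := Nat.exists_eq_add_of_le' h.two_le
  have hα := h.pos
  have hpow := h.pow_eq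
  rw [sum_range_succ, sum_range_succ] at hpow
  have hsum : 0 ≤ ∑ i ∈ range l, α ^ i := by positivity
  refine le_of_mul_le_mul_left ?_ (pow_pos hα l)
  rw [← pow_add, hpow, pow_succ]
  linarith

theorem mul_two_sub_le_two (h : IsDominantRoot k α) : (3 * (k : ℝ) - 1) * (2 - α) ≤ 2 := by
  have hα : 8 / 5 ≤ α := by nlinarith [h.one_lt, h.add_one_le_sq]
  calc (3 * (k : ℝ) - 1) * (2 - α) ≤ 2 * α ^ k * (2 - α) :=
        mul_le_mul_of_nonneg_right (three_mul_sub_one_le_two_mul_pow hα h.two_le)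
          (sub_pos.2 h.lt_two).le
    _ = 2 := by linear_combination 2 * two_sub_mul_pow_eq_one h.pow_eq

theorem sub_one_mul_two_sub_pos (h : IsDominantRoot k α) : 0 < ((k : ℝ) - 1) * (2 - α) :=
  mul_pos (sub_pos.2 (by exact_mod_cast h.two_le)) (sub_pos.2 h.lt_two)

theorem binetWeight_denom_pos (h : IsDominantRoot k α) : 0 < 2 + ((k : ℝ) + 1) * (α - 2) := by
  linarith [h.mul_two_sub_le_two, h.sub_one_mul_two_sub_pos]

theorem half_le_binetWeight (h : IsDominantRoot k α) : 1 / 2 ≤ binetWeight k α := by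
  rw [binetWeight, le_div_iff₀ h.binetWeight_denom_pos]
  linarith [h.sub_one_mul_two_sub_pos]

theorem binetWeight_le (h : IsDominantRoot k α) : binetWeight k α ≤ 3 / 4 := by
  rw [binetWeight, div_le_iff₀ h.binetWeight_denom_pos]
  linarith [h.mul_two_sub_le_two]

theorem half_le_mul_binetWeight (h : IsDominantRoot k α) :
    α / 2 ≤ (2 * α - 1) * binetWeight k α :=
  calc α / 2 ≤ (2 * α - 1) * (1 / 2) := by linarith [h.one_lt]
    _ ≤ (2 * α - 1) * binetWeight k α :=
      mul_le_mul_of_nonneg_left h.half_le_binetWeight (by linarith [h.one_lt])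

theorem mul_binetWeight_le (h : IsDominantRoot k α) :
    (2 * α - 1) * binetWeight k α ≤ 9 / 4 :=
  calc (2 * α - 1) * binetWeight k α ≤ (2 * α - 1) * (3 / 4) :=
        mul_le_mul_of_nonneg_left h.binetWeight_le (by linarith [h.one_lt])
    _ ≤ 9 / 4 := by linarith [h.lt_two]

end IsDominantRoot

section Lucas

variable {k : ℕ}

theorem genLucas_of_lt {m : ℕ} (h : m < k - 2) : genLucas k m = 0 := by
  rw [genLucas, dif_pos h]

theorem genLucas_sub_two (k : ℕ) : genLucas k (k - 2) = 2 := by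
  rw [genLucas, dif_neg (lt_irrefl _), dif_pos rfl]

theorem genLucas_sub_one (hk : 2 ≤ k) : genLucas k (k - 1) = 1 := by
  rw [genLucas, dif_neg (by omega), dif_neg (by omega), dif_pos rfl]

theorem isSolution_genLucas (R : Type*) [CommRing R] (hk : 2 ≤ k) :
    (kbonacci R k).IsSolution fun m => (genLucas k m : R) := by
  refine isSolution_kbonacci_iff.2 fun n => ?_
  rw [genLucas, dif_neg (by omega), dif_neg (by omega), dif_neg (by omega),
    ← sum_range_reflect, Int.cast_sum]
  refine sum_congr rfl fun i hi => ?_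
  have hindex : n + k - 1 - (k - 1 - i) = n + i := by have := mem_range.1 hi; omega
  rw [hindex]

theorem sum_mul_genLucas {R : Type*} [CommRing R] (hk : 2 ≤ k) (w : ℕ → R) :
    ∑ i ∈ range k, w i * (genLucas k i : R) = 2 * w (k - 2) + w (k - 1) := by
  have h0 := genLucas_sub_two k
  have h1 := genLucas_sub_one hk
  have hzero : ∀ i < k - 2, genLucas k i = 0 := fun i => genLucas_of_lt
  obtain ⟨l, rfl⟩ := Nat.exists_eq_add_of_le' hk
  simp only [Nat.add_sub_cancel, Nat.add_succ_sub_one] at h0 h1 hzero ⊢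
  rw [sum_range_succ, sum_range_succ, h0, h1, sum_eq_zero]
  · push_cast; ring
  · intro i hi
    rw [hzero i (mem_range.1 hi), Int.cast_zero, mul_zero]

theorem genLucas_self {R : Type*} [CommRing R] (hk : 2 ≤ k) : (genLucas k k : R) = 3 := by
  have hrec := isSolution_kbonacci_iff.1 (isSolution_genLucas R hk) 0
  have hsum := sum_mul_genLucas hk (1 : ℕ → R)
  simp only [zero_add, Pi.one_apply, one_mul] at hrec hsum
  rw [hrec, hsum]
  norm_num

variable {α : ℝ}

/-- The coefficient `c` in the Binet-type approximation `c * α ^ m` of `genLucas k m`. Its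
denominator undoes the index shift, `m = n + k - 2 = (n - 1) + (k - 1)`. -/
noncomputable def genLucasCoeff (k : ℕ) (α : ℝ) : ℝ :=
  (2 * α - 1) * binetWeight k α / α ^ (k - 1)

theorem genLucasCoeff_mul (h : IsDominantRoot k α) :
    genLucasCoeff k α * (α ^ k - k * α⁻¹)
      = (genLucas k k : ℝ) - ∑ i ∈ range k, α⁻¹ ^ (i + 1) * (genLucas k i : ℝ) := by
  have hk : k ≠ 0 := by have := h.two_le; omega
  have hinv : α⁻¹ ^ k = 2 - α := inv_pow_eq_two_sub h.pow_eq
  have hinv' : α⁻¹ ^ (k - 1) = (2 - α) * α := by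
    rw [← hinv, ← pow_sub_one_mul hk, mul_assoc, inv_mul_cancel₀ h.pos.ne', mul_one]
  calc genLucasCoeff k α * (α ^ k - k * α⁻¹)
      = (2 * α - 1) * binetWeight k α * (α⁻¹ ^ (k - 1) * α ^ k - k * α⁻¹ ^ k) := by
        rw [genLucasCoeff, div_eq_mul_inv, ← inv_pow, ← pow_sub_one_mul hk α⁻¹]
        ring
    _ = (2 * α - 1) * (binetWeight k α * (2 + ((k : ℝ) + 1) * (α - 2))) := by
        rw [hinv, hinv']
        linear_combination
          (2 * α - 1) * binetWeight k α * α * two_sub_mul_pow_eq_one h.pow_eq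
    _ = (2 * α - 1) * (α - 1) := by
        rw [binetWeight, div_mul_cancel₀ _ h.binetWeight_denom_pos.ne']
    _ = 3 - (2 * α⁻¹ ^ (k - 1) + α⁻¹ ^ k) := by rw [hinv, hinv']; ring
    _ = (genLucas k k : ℝ) - ∑ i ∈ range k, α⁻¹ ^ (i + 1) * (genLucas k i : ℝ) := by
        rw [genLucas_self h.two_le, sum_mul_genLucas h.two_le fun i => α⁻¹ ^ (i + 1),
          Nat.sub_add_cancel (Nat.pos_of_ne_zero hk),
          show k - 2 + 1 = k - 1 by have := h.two_le; omega]

theorem abs_genLucas_sub_le_of_lt (h : IsDominantRoot k α) {m : ℕ} (hm : m < k) :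
    |(genLucas k m : ℝ) - genLucasCoeff k α * α ^ m| ≤ 3 / 2 := by
  have hα := h.one_lt
  have hlower := h.half_le_mul_binetWeight
  have hupper := h.mul_binetWeight_le
  have hterm : genLucasCoeff k α * α ^ m
      = (2 * α - 1) * binetWeight k α / α ^ (k - 1 - m) := by
    rw [genLucasCoeff, pow_sub₀ α h.pos.ne' (show m ≤ k - 1 by omega), ← div_eq_mul_inv,
      div_div_eq_mul_div, div_mul_eq_mul_div]
  rw [hterm, abs_le]
  obtain hlt | rfl | rfl : m < k - 2 ∨ m = k - 2 ∨ m = k - 1 := by omega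
  · have hpow : 2 ≤ α ^ (k - 1 - m) :=
      calc 2 ≤ α ^ 2 := by linarith [h.add_one_le_sq]
        _ ≤ α ^ (k - 1 - m) := pow_le_pow_right₀ hα.le (by omega)
    have hpos : 0 ≤ (2 * α - 1) * binetWeight k α / α ^ (k - 1 - m) :=
      div_nonneg (by linarith) (by linarith)
    have hle : (2 * α - 1) * binetWeight k α / α ^ (k - 1 - m) ≤ 3 / 2 := by
      rw [div_le_iff₀ (by linarith)]
      linarith
    rw [genLucas_of_lt hlt]
    constructor <;> push_cast <;> linarith
  · have hexp : k - 1 - (k - 2) = 1 := by have := h.two_le; omega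
    have hle : (2 * α - 1) * binetWeight k α / α ≤ 7 / 2 := by
      rw [div_le_iff₀ h.pos]
      linarith
    have hge : 1 / 2 ≤ (2 * α - 1) * binetWeight k α / α := by
      rw [le_div_iff₀ h.pos]
      linarith
    rw [genLucas_sub_two, hexp, pow_one]
    constructor <;> push_cast <;> linarith
  · rw [genLucas_sub_one h.two_le, Nat.sub_self, pow_zero, div_one]
    constructor <;> push_cast <;> linarith

theorem abs_genLucas_sub_le (h : IsDominantRoot k α) (m : ℕ) :
    |(genLucas k m : ℝ) - genLucasCoeff k α * α ^ m| ≤ 3 / 2 := by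
  refine norm_le_of_isSolution (E := deflatedKbonacci k α) (le_of_eq ?_)
    (isSolution_deflatedKbonacci_sub_mul_pow h.pos.ne' h.pow_eq
      (isSolution_genLucas ℝ h.two_le) (genLucasCoeff_mul h))
    (by norm_num) (fun m hm => abs_genLucas_sub_le_of_lt h hm) m
  calc ∑ i : Fin k, ‖α⁻¹ ^ ((i : ℕ) + 1)‖ = ∑ i : Fin k, α⁻¹ ^ ((i : ℕ) + 1) :=
        sum_congr rfl fun i _ => Real.norm_of_nonneg (pow_nonneg (inv_nonneg.2 h.pos.le) _)
    _ = ∑ i ∈ range k, α⁻¹ ^ (i + 1) := (sum_range fun i => α⁻¹ ^ (i + 1)).symm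
    _ = 1 := sum_inv_pow_succ_eq_one h.pos.ne' h.pow_eq

theorem abs_lucasL_sub_le (h : IsDominantRoot k α) {n : ℕ} (hn : 1 ≤ n) :
    |(lucasL k n : ℝ) - (2 * α - 1) * binetWeight k α * α ^ (n - 1)| ≤ 3 / 2 := by
  have hterm : genLucasCoeff k α * α ^ (n + k - 2)
      = (2 * α - 1) * binetWeight k α * α ^ (n - 1) := by
    have hindex : n + k - 2 = (n - 1) + (k - 1) := by have := h.two_le; omega
    rw [genLucasCoeff, hindex, pow_add, div_mul_eq_mul_div, ← mul_assoc,
      mul_div_cancel_right₀ _ (pow_pos h.pos _).ne']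
  rw [← hterm]
  exact abs_genLucas_sub_le h (n + k - 2)

end Lucas

theorem cast_repunit {K : Type*} [DivisionRing K] [CharZero K] {g : ℤ} (hg : g ≠ 1) (d : ℕ) :
    (((g ^ d - 1) / (g - 1) : ℤ) : K) = ((g : K) ^ d - 1) / (g - 1) := by
  have hdvd : g - 1 ∣ g ^ d - 1 := by simpa only [one_pow] using sub_dvd_pow_sub_pow g 1 d
  rw [Int.cast_div hdvd (by exact_mod_cast sub_ne_zero.2 hg)]
  simp only [Int.cast_sub, Int.cast_pow, Int.cast_one]

theorem abs_div_sub_one_le_of_near_repdigit {g a b X L ε : ℝ} {d e : ℕ} (hg : 1 < g)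
    (ha : 0 < a) (hL : L = a * ((g ^ d - 1) / (g - 1)) + (b - a) * g ^ e)
    (hX : |L - X| ≤ ε) :
    |X * (g - 1) / (a * g ^ d) - 1|
      ≤ ((g - 1) * ε + a + (g - 1) * |b - a| * g ^ e) / (a * g ^ d) := by
  have hg0 : 0 < g := one_pos.trans hg
  have hg1 : 0 < g - 1 := sub_pos.2 hg
  have hden : 0 < a * g ^ d := mul_pos ha (pow_pos hg0 d)
  have hsplit : X * (g - 1) - a * g ^ d
      = -((g - 1) * (L - X)) + -a + (g - 1) * ((b - a) * g ^ e) := by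
    rw [hL]
    field_simp
    ring
  rw [div_sub_one hden.ne', abs_div, abs_of_pos hden, hsplit]
  gcongr
  calc |-((g - 1) * (L - X)) + -a + (g - 1) * ((b - a) * g ^ e)|
      ≤ |-((g - 1) * (L - X))| + |-a| + |(g - 1) * ((b - a) * g ^ e)| := abs_add_three _ _ _
    _ = (g - 1) * |L - X| + a + (g - 1) * |b - a| * g ^ e := by
        rw [abs_neg, abs_neg, abs_mul, abs_mul, abs_mul, abs_of_pos hg1, abs_of_pos ha,
          abs_of_pos (pow_pos hg0 e), mul_assoc]
    _ ≤ (g - 1) * ε + a + (g - 1) * |b - a| * g ^ e := by gcongr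

theorem abs_decimal_div_sub_one_le {a b X L : ℝ} {d e : ℕ} (hed : e ≤ d) (ha : 1 ≤ a)
    (hb0 : 0 ≤ b) (hb : b ≤ 9 * a)
    (hL : L = a * ((10 ^ d - 1) / 9) + (b - a) * 10 ^ e) (hX : |L - X| ≤ 3 / 2) :
    |X * 9 / (a * 10 ^ d) - 1| ≤ 87 / 10 ^ (d - e) := by
  have ha0 : 0 < a := by linarith
  have hba : |b - a| ≤ 8 * a := abs_le.2 ⟨by linarith, by linarith⟩
  have hpow : (1 : ℝ) ≤ 10 ^ e := one_le_pow₀ (by norm_num)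
  have hten : (10 : ℝ) - 1 = 9 := by norm_num
  have hbound := abs_div_sub_one_le_of_near_repdigit (g := 10) (by norm_num) ha0
    (by rw [hten]; exact hL) hX
  rw [hten] at hbound
  refine hbound.trans ?_
  have haP : a ≤ a * 10 ^ e := le_mul_of_one_le_right ha0.le hpow
  calc (9 * (3 / 2) + a + 9 * |b - a| * 10 ^ e) / (a * 10 ^ d)
      ≤ (9 * (3 / 2) + a + 9 * (8 * a) * 10 ^ e) / (a * 10 ^ d) := by gcongr
    _ ≤ 87 * (a * 10 ^ e) / (a * 10 ^ d) := by gcongr; linarith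
    _ = 87 / 10 ^ (d - e) := by
        rw [← Nat.sub_add_cancel hed, pow_add, Nat.add_sub_cancel]
        field_simp

theorem lambda1_bound_general {k n d1 d2 : ℕ} {a b : ℤ} {α : ℝ} (hn : 1 ≤ n) (hd : d2 ≤ d1)
    (ha : 1 ≤ a) (hb0 : 0 ≤ b) (hb : b ≤ 9 * a)
    (heq : lucasL k n = a * ((10 ^ d1 - 1) / 9) + (b - a) * 10 ^ d2)
    (h : IsDominantRoot k α) :
    |α ^ (n - 1) / 10 ^ d1 * binetWeight k α * (2 * α - 1) * (9 / (a : ℝ)) - 1|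
      ≤ 87 / 10 ^ (d1 - d2) := by
  have hL : (lucasL k n : ℝ) = a * ((10 ^ d1 - 1) / 9) + (b - a) * 10 ^ d2 := by
    have hrepunit : (((10 ^ d1 - 1) / 9 : ℤ) : ℝ) = (10 ^ d1 - 1) / 9 := by
      simpa [show (10 : ℝ) - 1 = 9 by norm_num] using
        cast_repunit (K := ℝ) (g := 10) (by norm_num) d1
    simp only [heq, Int.cast_add, Int.cast_mul, Int.cast_sub, Int.cast_pow, Int.cast_ofNat,
      hrepunit]
  have hbound := abs_decimal_div_sub_one_le hd (by exact_mod_cast ha) (by exact_mod_cast hb0)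
    (by exact_mod_cast hb) hL (abs_lucasL_sub_le h hn)
  convert hbound using 3
  field_simp

/-- The bound `|α^{n-1} 10^{-d1} f_k(α)(2α-1)(9/a) - 1| ≤ 87/10^{d1-d2}` on the linear
form `Λ₁`. -/
theorem lambda1_bound (k n : ℕ) (hk : 2 ≤ k) (hnk : k + 1 ≤ n) (hn : 5 < n)
    (d1 d2 : ℕ) (a b : ℤ) (hd : d2 < d1) (hd1 : 3 ≤ d1)
    (ha1 : 1 ≤ a) (ha9 : a ≤ 9) (hb0 : 0 ≤ b) (hb9 : b ≤ 9)
    (heq : lucasL k n = a * ((10 ^ d1 - 1) / 9) + (b - a) * 10 ^ d2)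
    (α : ℝ) (hα : 1 < α) (hroot : α ^ k = ∑ i ∈ Finset.range k, α ^ i) :
    |α ^ (n - 1) / 10 ^ d1 * ((α - 1) / (2 + ((k : ℝ) + 1) * (α - 2)))
        * (2 * α - 1) * (9 / (a : ℝ)) - 1|
      ≤ 87 / 10 ^ (d1 - d2) :=
  lambda1_bound_general (by omega) hd.le ha1 hb0 (by omega) heq ⟨hα, hroot⟩
end

section
/- There are no integers m ≥ 0, d1 ≥ 3, d2 with 0 ≤ d2 < d1, a with 1 ≤ a ≤ 9, and b with 0 ≤ b ≤ 9 such that 9·2^{m} = a·10^{d1} + 9·(b−a)·10^{d2}. In particular, for d1 ≥ 3 and 0 ≤ b ≤ 9 the equation 2^{m} = 10^{d1} + b − 9 has no solutions. -/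
/-!
Reducing the equation modulo `9` forces `a = 9`, so that `2 ^ m = 10 ^ d1 + (b - 9) * 10 ^ d2`, and
modulo `5` it then forces `d2 = 0`. The integer `b - 9` is too close to `0` for the remaining
equation `2 ^ m = 10 ^ d1 + (b - 9)`: dividing by `2 ^ d1` leaves a power of two at distance less
than `3` from `5 ^ d1`, but modulo `24` the powers of `5` are `1` and `5`, while the powers of `2`
from `8` on are `8` and `16`.
-/

theorem five_pow_emod_twentyFour (n : ℕ) : (5 : ℤ) ^ n % 24 = 1 ∨ (5 : ℤ) ^ n % 24 = 5 := by
  induction n with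
  | zero => norm_num
  | succ n ih => rw [pow_succ]; omega

theorem two_pow_emod_twentyFour {n : ℕ} (hn : 3 ≤ n) :
    (2 : ℤ) ^ n % 24 = 8 ∨ (2 : ℤ) ^ n % 24 = 16 := by
  induction n, hn using Nat.le_induction with
  | base => norm_num
  | succ n _ ih => rw [pow_succ]; omega

theorem two_pow_ne_five_pow_add {k d : ℕ} {e : ℤ} (hd : 2 ≤ d) (he : |e| < 3) :
    (2 : ℤ) ^ k ≠ 5 ^ d + e := by
  intro h
  have ⟨he_lower, he_upper⟩ := abs_lt.mp he
  have five_pow_ge : (5 : ℤ) ^ 2 ≤ 5 ^ d := pow_le_pow_right₀ (by norm_num) hd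
  have two_pow_gt : (2 : ℤ) ^ 2 < 2 ^ k := by linarith
  have hk : 2 < k := (pow_lt_pow_iff_right₀ one_lt_two).mp two_pow_gt
  have five_pow_mod := five_pow_emod_twentyFour d
  have two_pow_mod := two_pow_emod_twentyFour hk
  omega

/-- The bound on `|c|` is sharp, since `2 ^ 10 = 10 ^ 3 + 3 * 2 ^ 3`. -/
theorem two_pow_ne_ten_pow_add {m d : ℕ} {c : ℤ} (hd : 2 ≤ d) (hc : |c| < 3 * 2 ^ d) :
    (2 : ℤ) ^ m ≠ 10 ^ d + c := by
  intro h
  have two_pow_pos : (0 : ℤ) < 2 ^ d := by positivity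
  have ten_pow : (10 : ℤ) ^ d = 2 ^ d * 5 ^ d := by rw [← mul_pow]; norm_num
  have five_pow_ge : (5 : ℤ) ^ 2 ≤ 5 ^ d := pow_le_pow_right₀ (by norm_num) hd
  have two_pow_le : (2 : ℤ) ^ d ≤ 2 ^ m := by
    rw [h, ten_pow]
    nlinarith [(abs_lt.mp hc).1]
  obtain ⟨k, rfl⟩ := Nat.exists_eq_add_of_le ((pow_le_pow_iff_right₀ one_lt_two).mp two_pow_le)
  obtain ⟨e, rfl⟩ : (2 : ℤ) ^ d ∣ c :=
    ⟨2 ^ k - 5 ^ d, by rw [mul_sub, ← pow_add, ← ten_pow, h]; ring⟩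
  have he : |e| < 3 := by
    rw [abs_mul, abs_of_pos two_pow_pos, mul_comm] at hc
    exact lt_of_mul_lt_mul_right hc two_pow_pos.le
  rw [pow_add, ten_pow, ← mul_add] at h
  exact two_pow_ne_five_pow_add hd he (mul_left_cancel₀ two_pow_pos.ne' h)

theorem two_pow_ne_mul_ten_pow_add_mul_ten_pow {m d₁ d₂ : ℕ} {x y : ℤ} (hd₁ : d₁ ≠ 0)
    (hd₂ : d₂ ≠ 0) : (2 : ℤ) ^ m ≠ x * 10 ^ d₁ + y * 10 ^ d₂ := by
  intro h
  have five_dvd_ten_pow {n : ℕ} (hn : n ≠ 0) : (5 : ℤ) ∣ 10 ^ n := dvd_pow (by norm_num) hn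
  have five_dvd : (5 : ℤ) ∣ 2 ^ m := by
    rw [h]
    exact dvd_add ((five_dvd_ten_pow hd₁).mul_left x) ((five_dvd_ten_pow hd₂).mul_left y)
  have five_prime : Prime (5 : ℤ) := by norm_num
  exact absurd (five_prime.dvd_of_dvd_pow five_dvd) (by norm_num)

theorem nine_dvd_of_nine_dvd_mul_ten_pow {a : ℤ} {n : ℕ} (h : 9 ∣ a * 10 ^ n) : 9 ∣ a :=
  have nine_coprime_ten : IsCoprime (9 : ℤ) 10 := by norm_num
  nine_coprime_ten.pow_right.dvd_of_dvd_mul_right h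

theorem lambda4_ne_zero_general {m d1 d2 : ℕ} {a b : ℤ} (hd1 : 2 ≤ d1) (ha1 : 1 ≤ a) (ha9 : a ≤ 9)
    (hb : |b - 9| < 3 * 2 ^ d1) :
    (9 * 2 ^ m : ℤ) ≠ a * 10 ^ d1 + 9 * (b - a) * 10 ^ d2 := by
  intro h
  have nine_dvd : 9 ∣ a :=
    nine_dvd_of_nine_dvd_mul_ten_pow (n := d1)
      ⟨2 ^ m - (b - a) * 10 ^ d2, by linear_combination -h⟩
  obtain rfl : a = 9 := by omega
  have h_two_pow : (2 : ℤ) ^ m = 1 * 10 ^ d1 + (b - 9) * 10 ^ d2 := by linarith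
  rcases eq_or_ne d2 0 with rfl | hd2
  · exact two_pow_ne_ten_pow_add hd1 hb (by simpa using h_two_pow)
  · exact two_pow_ne_mul_ten_pow_add_mul_ten_pow (by omega) hd2 h_two_pow

theorem abs_sub_nine_lt_three_mul_two_pow {b : ℤ} {d : ℕ} (hd : 2 ≤ d) (hb0 : 0 ≤ b)
    (hb9 : b ≤ 9) : |b - 9| < 3 * 2 ^ d := by
  have two_pow_ge : (2 : ℤ) ^ 2 ≤ 2 ^ d := pow_le_pow_right₀ one_le_two hd
  exact abs_lt.mpr ⟨by linarith, by linarith⟩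

/-- Nonvanishing of `Λ₄`: the equation `9·2^m = a·10^{d1} + 9(b-a)·10^{d2}` has no
solutions with `d1 ≥ 3`, `0 ≤ d2 < d1`, `1 ≤ a ≤ 9`, `0 ≤ b ≤ 9`; in particular
`2^m = 10^{d1} + b - 9` has no solutions with `d1 ≥ 3` and `0 ≤ b ≤ 9`. -/
theorem lambda4_ne_zero :
    (¬ ∃ (m d1 d2 : ℕ) (a b : ℤ), 3 ≤ d1 ∧ d2 < d1 ∧
        1 ≤ a ∧ a ≤ 9 ∧ 0 ≤ b ∧ b ≤ 9 ∧
        (9 * 2 ^ m : ℤ) = a * 10 ^ d1 + 9 * (b - a) * 10 ^ d2) ∧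
    ∀ (m d1 : ℕ) (b : ℤ), 3 ≤ d1 → 0 ≤ b → b ≤ 9 →
      (2 ^ m : ℤ) ≠ 10 ^ d1 + b - 9 :=
  ⟨fun ⟨_, _, _, _, _, hd, _, ha1, ha9, hb0, hb9, h⟩ =>
    lambda4_ne_zero_general (by omega) ha1 ha9
      (abs_sub_nine_lt_three_mul_two_pow (by omega) hb0 hb9) h,
   fun _ _ _ hd hb0 hb9 h =>
    two_pow_ne_ten_pow_add (by omega)
      (abs_sub_nine_lt_three_mul_two_pow (by omega) hb0 hb9) (h.trans (add_sub_assoc _ _ _))⟩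
end
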